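/- For every l ≥ 0 and every integer k with τ_l ≤ k ≤ τ_{l+1}: if Ȳ_k = 0 then |S_{k+1}| ∈ {0,1}, and if S_{k+1} = 0 then Ȳ_k = 0. -/

import Mathlib

noncomputable section

/-- The walk `S` associated with the sign sequence `X : {1,2,…} → {−1,1}`:
`S 0 = 0`, `S n = X 1 + ⋯ + X n`. -/
def cvWalk (X : ℕ → ℤ) (n : ℕ) : ℤ := ∑ j ∈ Finset.Icc 1 n, X j

/-- The crossing times of `S`: `τ 0 = 0` and
`τ (l+1) = min {i > τ l : S (i-1) * S (i+1) < 0}`. -/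
def cvTau (X : ℕ → ℤ) : ℕ → ℕ
  | 0 => 0
  | l + 1 => sInf {i : ℕ | cvTau X l < i ∧ cvWalk X (i - 1) * cvWalk X (i + 1) < 0}

/-- The increments of the Csaki–Vincze transform `S̄ = T(S)`:
`X̄ j = Σ_{l ≥ 0} (−1)^(l+1) · X 1 · X (j+1) · 1_{τ l + 1 ≤ j ≤ τ (l+1)}`
(the sum may be truncated to `l ≤ j` since `l ≤ τ l` whenever `τ l + 1 ≤ j`). -/
def cvXbar (X : ℕ → ℤ) (j : ℕ) : ℤ :=
  ∑ l ∈ Finset.range (j + 1),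
    (-1 : ℤ) ^ (l + 1) * X 1 * X (j + 1) *
      (if cvTau X l + 1 ≤ j ∧ j ≤ cvTau X (l + 1) then 1 else 0)

/-- The Csaki–Vincze transform `S̄ = T(S)`. -/
def cvSbar (X : ℕ → ℤ) (n : ℕ) : ℤ := ∑ j ∈ Finset.Icc 1 n, cvXbar X j

/-- `Ȳ`-type process of a walk `f`: `max_{0 ≤ k ≤ n} f k − f n`. -/
def cvYof (f : ℕ → ℤ) (n : ℕ) : ℤ :=
  (Finset.range (n + 1)).sup' Finset.nonempty_range_add_one f - f n

/-- `Ȳ n = max_{0 ≤ k ≤ n} S̄ k − S̄ n`. -/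
def cvYbar (X : ℕ → ℤ) (n : ℕ) : ℤ := cvYof (cvSbar X) n

/-!
Between `τ l` and `τ (l + 1)` the walk `S` does not change sign: it starts there with
`S (τ l) = 0` and keeps the sign `(-1) ^ l * X 1` of its first step. On that interval `X̄ j` is
`X (j + 1)` times minus this sign, so summation gives `S̄ (τ l) = 2 * l` and
`S̄ k = 2 * l + 1 - |S (k + 1)|` for `τ l ≤ k < τ (l + 1)`. Hence the running maximum of `S̄` at
time `k` lies between `2 * l` and `2 * l + 1`, and `Ȳ k ≤ |S (k + 1)| ≤ Ȳ k + 1`.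
-/

/-- A nearest-neighbor path on `ℤ`, i.e. a path all of whose steps are `±1`. It abstracts
the property of the walk `S` that forces it to pass through `0` whenever it changes sign. -/
def IsNearestNeighborPath (f : ℕ → ℤ) : Prop := ∀ n, |f (n + 1) - f n| = 1

/-- The path `f` changes sign at time `i`, as in the definition of `τ`; the truncated subtraction
makes this meaningful only for `1 ≤ i`. -/
def IsCrossing (f : ℕ → ℤ) (i : ℕ) : Prop := f (i - 1) * f (i + 1) < 0

namespace IsNearestNeighborPath

variable {f : ℕ → ℤ} {c : ℤ} {i m n k : ℕ}

theorem succ_eq (hf : IsNearestNeighborPath f) (n : ℕ) :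
    f (n + 1) = f n + 1 ∨ f (n + 1) = f n - 1 := by
  have := (abs_eq zero_le_one).mp (hf n)
  omega

theorem const_mul (hf : IsNearestNeighborPath f) (hc : |c| = 1) :
    IsNearestNeighborPath fun n => c * f n := fun n => by
  rw [← mul_sub, abs_mul, hc, hf n, one_mul]

theorem eq_zero_of_isCrossing (hf : IsNearestNeighborPath f) (hi : 0 < i)
    (hcross : IsCrossing f i) : f i = 0 := by
  obtain ⟨j, rfl⟩ := Nat.exists_eq_add_one.mpr hi
  have hprev := hf.succ_eq j
  have hnext := hf.succ_eq (j + 1)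
  rcases mul_neg_iff.mp hcross with h | h <;> simp only [Nat.add_sub_cancel] at h <;> omega

theorem succ_eq_neg_one_of_isCrossing (hf : IsNearestNeighborPath f) (hi : 0 < i)
    (hcross : IsCrossing f i) (hprev : 0 ≤ f (i - 1)) : f (i + 1) = -1 := by
  have hzero := hf.eq_zero_of_isCrossing hi hcross
  have hneg : f (i + 1) < 0 := neg_of_mul_neg_right hcross hprev
  have hstep := hf.succ_eq i
  omega

theorem nonneg_of_forall_not_isCrossing (hf : IsNearestNeighborPath f) (hm : 0 ≤ f m)
    (hm' : 0 ≤ f (m + 1)) (hcross : ∀ i, m < i → i < n → ¬IsCrossing f i)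
    (hmk : m ≤ k) (hkn : k ≤ n) : 0 ≤ f k := by
  suffices h : ∀ j, m ≤ j → j < n → 0 ≤ f j ∧ 0 ≤ f (j + 1) by
    rcases hmk.eq_or_lt with rfl | hlt
    · exact hm
    · obtain ⟨j, rfl⟩ := Nat.exists_eq_add_one.mpr (Nat.zero_lt_of_lt hlt)
      exact (h j (by omega) (by omega)).2
  intro j hmj
  induction j, hmj using Nat.le_induction with
  | base => exact fun _ => ⟨hm, hm'⟩
  | succ j hmj ih =>
    intro hjn
    obtain ⟨hj, hj'⟩ := ih (by omega)
    refine ⟨hj', not_lt.mp fun hneg => ?_⟩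
    -- Turning negative at `j + 2` forces the values `1, 0, -1` at `j, j + 1, j + 2`.
    have hpos : 0 < f j := by
      have := hf.succ_eq j
      have := hf.succ_eq (j + 1)
      omega
    exact hcross (j + 1) (by omega) hjn (mul_neg_of_pos_of_neg hpos hneg)

end IsNearestNeighborPath

theorem isCrossing_const_mul_iff {f : ℕ → ℤ} {c : ℤ} (hc : c ≠ 0) {i : ℕ} :
    IsCrossing (fun n => c * f n) i ↔ IsCrossing f i := by
  unfold IsCrossing
  rw [mul_mul_mul_comm]
  exact smul_neg_iff_of_pos_left (mul_self_pos.mpr hc)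

theorem sub_le_cvYof (f : ℕ → ℤ) {j n : ℕ} (hj : j ≤ n) : f j - f n ≤ cvYof f n :=
  sub_le_sub_right (Finset.le_sup' f (Finset.mem_range_succ_iff.mpr hj)) _

theorem cvYof_nonneg (f : ℕ → ℤ) (n : ℕ) : 0 ≤ cvYof f n := by
  simpa only [sub_self] using sub_le_cvYof f le_rfl

theorem cvYof_le_iff {f : ℕ → ℤ} {n : ℕ} {c : ℤ} : cvYof f n ≤ c ↔ ∀ j ≤ n, f j ≤ c + f n := by
  simp only [cvYof, sub_le_iff_le_add, Finset.sup'_le_iff, Finset.mem_range_succ_iff]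

/-- The sign `(-1) ^ l * X 1`, which is the sign of `S` on the excursion that starts at `τ l`. -/
def cvSign (X : ℕ → ℤ) (l : ℕ) : ℤ := (-1) ^ l * X 1

section

variable {X : ℕ → ℤ} {l j k : ℕ}

theorem cvWalk_succ (X : ℕ → ℤ) (n : ℕ) : cvWalk X (n + 1) = cvWalk X n + X (n + 1) :=
  Finset.sum_Icc_succ_top (by omega) _

theorem cvSbar_succ (X : ℕ → ℤ) (n : ℕ) : cvSbar X (n + 1) = cvSbar X n + cvXbar X (n + 1) :=
  Finset.sum_Icc_succ_top (by omega) _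

theorem isNearestNeighborPath_cvWalk (hX : ∀ j, 1 ≤ j → X j = 1 ∨ X j = -1) :
    IsNearestNeighborPath (cvWalk X) := fun n => by
  rw [cvWalk_succ, add_sub_cancel_left]
  exact (abs_eq zero_le_one).mpr (hX (n + 1) (by omega))

theorem cvSign_succ (X : ℕ → ℤ) (l : ℕ) : cvSign X (l + 1) = -cvSign X l := by
  rw [cvSign, cvSign, pow_succ', neg_one_mul, neg_mul]

theorem abs_cvSign (hX₁ : X 1 = 1 ∨ X 1 = -1) (l : ℕ) : |cvSign X l| = 1 := by
  rw [cvSign, abs_mul, abs_neg_one_pow, one_mul]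
  exact (abs_eq zero_le_one).mpr hX₁

theorem cvSign_ne_zero (hX₁ : X 1 = 1 ∨ X 1 = -1) (l : ℕ) : cvSign X l ≠ 0 :=
  abs_pos.mp (abs_cvSign hX₁ l ▸ one_pos)

theorem strictMono_cvTau
    (hinf : {i : ℕ | 1 ≤ i ∧ cvWalk X (i - 1) * cvWalk X (i + 1) < 0}.Infinite) :
    StrictMono (cvTau X) :=
  strictMono_nat_of_lt_succ fun l =>
    have ⟨i, ⟨_, hi⟩, hl⟩ := hinf.exists_gt (cvTau X l)
    (Nat.sInf_mem ⟨i, hl, hi⟩ :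
      cvTau X (l + 1) ∈ {i | cvTau X l < i ∧ IsCrossing (cvWalk X) i}).1

theorem isCrossing_cvTau_succ (h : 0 < cvTau X (l + 1)) :
    IsCrossing (cvWalk X) (cvTau X (l + 1)) :=
  (Nat.sInf_mem (Nat.nonempty_of_pos_sInf h)).2

theorem not_isCrossing_of_lt_cvTau_succ (hl : cvTau X l < j) (hl' : j < cvTau X (l + 1)) :
    ¬IsCrossing (cvWalk X) j :=
  fun h => Nat.notMem_of_lt_sInf hl' ⟨hl, h⟩

theorem exists_cvTau_le_lt_cvTau_succ (hτ : StrictMono (cvTau X)) (k : ℕ) :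
    ∃ l, cvTau X l ≤ k ∧ k < cvTau X (l + 1) := by
  have hcover := iUnion_Ico_map_succ_eq_Ici (fun l => hτ.monotone l.zero_le)
    hτ.not_bddAbove_range_of_wellFoundedLT
  exact Set.mem_iUnion.mp (hcover.ge k.zero_le)

theorem cvWalk_cvTau (hX : ∀ j, 1 ≤ j → X j = 1 ∨ X j = -1) (hτ : StrictMono (cvTau X)) (l : ℕ) :
    cvWalk X (cvTau X l) = 0 := by
  cases l with
  | zero => rfl
  | succ l =>
    have hpos : 0 < cvTau X (l + 1) := Nat.zero_lt_of_lt (hτ l.lt_succ_self)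
    exact (isNearestNeighborPath_cvWalk hX).eq_zero_of_isCrossing hpos (isCrossing_cvTau_succ hpos)

theorem cvSign_mul_cvWalk_nonneg (hX : ∀ j, 1 ≤ j → X j = 1 ∨ X j = -1)
    (hτ : StrictMono (cvTau X)) (hstart : 0 ≤ cvSign X l * cvWalk X (cvTau X l + 1))
    (hlk : cvTau X l ≤ k) (hkl : k ≤ cvTau X (l + 1)) : 0 ≤ cvSign X l * cvWalk X k := by
  have hsign := abs_cvSign (hX 1 le_rfl) l
  refine ((isNearestNeighborPath_cvWalk hX).const_mul hsign).nonneg_of_forall_not_isCrossing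
    ?_ ?_ (fun i hi hi' => ?_) hlk hkl
  · rw [cvWalk_cvTau hX hτ, mul_zero]
  · exact hstart
  · exact (isCrossing_const_mul_iff (cvSign_ne_zero (hX 1 le_rfl) l)).not.mpr
      (not_isCrossing_of_lt_cvTau_succ hi hi')

theorem cvSign_mul_cvWalk_cvTau_add_one (hX : ∀ j, 1 ≤ j → X j = 1 ∨ X j = -1)
    (hτ : StrictMono (cvTau X)) (l : ℕ) : cvSign X l * cvWalk X (cvTau X l + 1) = 1 := by
  induction l with
  | zero => rcases hX 1 le_rfl with h | h <;> simp [cvSign, cvTau, cvWalk, h]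
  | succ l ih =>
    have hlt : cvTau X l < cvTau X (l + 1) := hτ l.lt_succ_self
    have hpos := Nat.zero_lt_of_lt hlt
    have hsign := abs_cvSign (hX 1 le_rfl) l
    have hprev : 0 ≤ cvSign X l * cvWalk X (cvTau X (l + 1) - 1) :=
      cvSign_mul_cvWalk_nonneg hX hτ (ih ▸ zero_le_one) (by omega) (by omega)
    have hnext : cvSign X l * cvWalk X (cvTau X (l + 1) + 1) = -1 :=
      ((isNearestNeighborPath_cvWalk hX).const_mul hsign).succ_eq_neg_one_of_isCrossing hpos
        ((isCrossing_const_mul_iff (cvSign_ne_zero (hX 1 le_rfl) l)).mpr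
          (isCrossing_cvTau_succ hpos)) hprev
    rw [cvSign_succ, neg_mul, hnext, neg_neg]

theorem cvSign_mul_cvWalk_eq_abs (hX : ∀ j, 1 ≤ j → X j = 1 ∨ X j = -1)
    (hτ : StrictMono (cvTau X)) (hlk : cvTau X l ≤ k) (hkl : k ≤ cvTau X (l + 1)) :
    cvSign X l * cvWalk X k = |cvWalk X k| := by
  have hstart := cvSign_mul_cvWalk_cvTau_add_one hX hτ l
  have hnonneg := cvSign_mul_cvWalk_nonneg hX hτ (hstart ▸ zero_le_one) hlk hkl
  rw [← abs_of_nonneg hnonneg, abs_mul, abs_cvSign (hX 1 le_rfl), one_mul]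

theorem cvXbar_eq_neg_cvSign_mul (hτ : StrictMono (cvTau X)) (hlj : cvTau X l < j)
    (hjl : j ≤ cvTau X (l + 1)) : cvXbar X j = -cvSign X l * X (j + 1) := by
  have hrange : l ∈ Finset.range (j + 1) :=
    Finset.mem_range_succ_iff.mpr (hτ.le_apply.trans hlj.le)
  have hunique : ∀ m, cvTau X m + 1 ≤ j ∧ j ≤ cvTau X (m + 1) → m = l := by
    rintro m ⟨hmj, hjm⟩
    have hml : m < l + 1 := hτ.lt_iff_lt.mp (hmj.trans hjl)
    have hlm : l < m + 1 := hτ.lt_iff_lt.mp (hlj.trans_le hjm)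
    omega
  rw [cvXbar, Finset.sum_eq_single_of_mem l hrange fun m _ hm => by
    rw [if_neg (mt (hunique m) hm), mul_zero], if_pos ⟨hlj, hjl⟩, cvSign]
  ring

theorem cvSbar_sub_cvSbar_cvTau (hτ : StrictMono (cvTau X)) (hlk : cvTau X l ≤ k)
    (hkl : k ≤ cvTau X (l + 1)) :
    cvSbar X k - cvSbar X (cvTau X l) =
      cvSign X l * (cvWalk X (cvTau X l + 1) - cvWalk X (k + 1)) := by
  induction k, hlk using Nat.le_induction with
  | base => rw [sub_self, sub_self, mul_zero]
  | succ k hlk ih =>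
    have hstep := cvXbar_eq_neg_cvSign_mul hτ (Nat.lt_succ_of_le hlk) hkl
    linear_combination ih (by omega) + cvSbar_succ X k + hstep + cvSign X l * cvWalk_succ X (k + 1)

theorem cvSbar_cvTau (hX : ∀ j, 1 ≤ j → X j = 1 ∨ X j = -1) (hτ : StrictMono (cvTau X)) (l : ℕ) :
    cvSbar X (cvTau X l) = 2 * l := by
  induction l with
  | zero => rfl
  | succ l ih =>
    have hincr := cvSbar_sub_cvSbar_cvTau hτ (hτ l.lt_succ_self).le le_rfl
    have hstart := cvSign_mul_cvWalk_cvTau_add_one hX hτ l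
    have hend := cvSign_mul_cvWalk_cvTau_add_one hX hτ (l + 1)
    rw [cvSign_succ] at hend
    push_cast
    linear_combination hincr + ih + hstart + hend

theorem cvSbar_eq_sub_abs_cvWalk (hX : ∀ j, 1 ≤ j → X j = 1 ∨ X j = -1)
    (hτ : StrictMono (cvTau X)) (hlk : cvTau X l ≤ k) (hkl : k < cvTau X (l + 1)) :
    cvSbar X k = 2 * l + 1 - |cvWalk X (k + 1)| := by
  have habs := cvSign_mul_cvWalk_eq_abs hX hτ (hlk.trans k.le_succ) hkl
  linear_combination cvSbar_sub_cvSbar_cvTau hτ hlk hkl.le + cvSbar_cvTau hX hτ l +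
    cvSign_mul_cvWalk_cvTau_add_one hX hτ l - habs

theorem cvYbar_le_abs_cvWalk_succ (hX : ∀ j, 1 ≤ j → X j = 1 ∨ X j = -1)
    (hτ : StrictMono (cvTau X)) (k : ℕ) : cvYbar X k ≤ |cvWalk X (k + 1)| := by
  obtain ⟨l, hlk, hkl⟩ := exists_cvTau_le_lt_cvTau_succ hτ k
  refine cvYof_le_iff.mpr fun j hjk => ?_
  obtain ⟨m, hmj, hjm⟩ := exists_cvTau_le_lt_cvTau_succ hτ j
  have hml : m < l + 1 := hτ.lt_iff_lt.mp (hmj.trans_lt (hjk.trans_lt hkl))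
  have hj := cvSbar_eq_sub_abs_cvWalk hX hτ hmj hjm
  have hk := cvSbar_eq_sub_abs_cvWalk hX hτ hlk hkl
  have hj_abs := abs_nonneg (cvWalk X (j + 1))
  omega

theorem abs_cvWalk_succ_le_cvYbar_add_one (hX : ∀ j, 1 ≤ j → X j = 1 ∨ X j = -1)
    (hτ : StrictMono (cvTau X)) (k : ℕ) : |cvWalk X (k + 1)| ≤ cvYbar X k + 1 := by
  obtain ⟨l, hlk, hkl⟩ := exists_cvTau_le_lt_cvTau_succ hτ k
  have hmax : cvSbar X (cvTau X l) - cvSbar X k ≤ cvYbar X k := sub_le_cvYof _ hlk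
  rw [cvSbar_cvTau hX hτ, cvSbar_eq_sub_abs_cvWalk hX hτ hlk hkl] at hmax
  omega

end

/-- For every `l ≥ 0` and every `k` with `τ l ≤ k ≤ τ (l+1)`: if `Ȳ k = 0` then
`|S (k+1)| ∈ {0,1}`, and if `S (k+1) = 0` then `Ȳ k = 0`. -/
theorem cv_ybar_zero_walk (X : ℕ → ℤ) (hX : ∀ j, 1 ≤ j → X j = 1 ∨ X j = -1)
    (hinf : {i : ℕ | 1 ≤ i ∧ cvWalk X (i - 1) * cvWalk X (i + 1) < 0}.Infinite)
    (l k : ℕ) (hk1 : cvTau X l ≤ k) (hk2 : k ≤ cvTau X (l + 1)) :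
    (cvYbar X k = 0 → abs (cvWalk X (k + 1)) = 0 ∨ abs (cvWalk X (k + 1)) = 1) ∧
    (cvWalk X (k + 1) = 0 → cvYbar X k = 0) := by
  have hτ := strictMono_cvTau hinf
  have hupper := cvYbar_le_abs_cvWalk_succ hX hτ k
  have hlower := abs_cvWalk_succ_le_cvYbar_add_one hX hτ k
  refine ⟨fun hY => ?_, fun hS => ?_⟩
  · have hnonneg := abs_nonneg (cvWalk X (k + 1))
    omega
  · rw [hS, abs_zero] at hupper
    exact le_antisymm hupper (cvYof_nonneg (cvSbar X) k)
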